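/- Let μ and μ̃ be Borel probability measures on X, p ≥ 1 and k > 0, set δ = ‖μ − μ̃‖_TV, and assume the condition (A1): W_{p,1−δ/10}(μ, μ̃) ≥ (1/2)·W_p(μ, μ̃). Then min{ δ/10, (1/(2k))·W_p(μ, μ̃) } ≤ RPW_{p,k}(μ, μ̃) ≤ min{ δ, (1/k)·W_p(μ, μ̃) }; in particular RPW_{p,k}(μ, μ̃) = Θ(min{δ, (1/k)·W_p(μ, μ̃)}). -/

import Mathlib

open MeasureTheory

noncomputable section

/-- `γ` is an `α`-partial transport plan from `μ` to `ν`: a Borel measure on `X × X` of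
total mass `α` whose first marginal is dominated by `μ` and second marginal by `ν`. -/
def IsPartialPlan {X : Type*} [MeasurableSpace X] (μ ν : Measure X) (α : ℝ)
    (γ : Measure (X × X)) : Prop :=
  γ Set.univ = ENNReal.ofReal α ∧ γ.map Prod.fst ≤ μ ∧ γ.map Prod.snd ≤ ν

/-- The cost `w_p(γ) = (∫ c(x,y)^p dγ)^(1/p)` of a transport plan. -/
def planCost {X : Type*} [MetricSpace X] [MeasurableSpace X] (p : ℝ)
    (γ : Measure (X × X)) : ℝ :=
  (∫ z, dist z.1 z.2 ^ p ∂γ) ^ (1 / p)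

/-- The `α`-partial `p`-Wasserstein distance `W_{p,α}(μ, ν)`. -/
def partialW {X : Type*} [MetricSpace X] [MeasurableSpace X] (p α : ℝ)
    (μ ν : Measure X) : ℝ :=
  sInf { c : ℝ | ∃ γ : Measure (X × X), IsPartialPlan μ ν α γ ∧ c = planCost p γ }

/-- The `(p,k)`-RPW distance: the least `ε ∈ [0,1]` with `W_{p,1-ε}(μ,ν) ≤ kε`. -/
def RPW {X : Type*} [MetricSpace X] [MeasurableSpace X] (p k : ℝ)
    (μ ν : Measure X) : ℝ :=
  sInf { ε : ℝ | ε ∈ Set.Icc (0:ℝ) 1 ∧ partialW p (1 - ε) μ ν ≤ k * ε }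

/-- The total variation distance `‖μ − ν‖_TV = sup { |μ(A) − ν(A)| : A Borel }`. -/
def TVdist {X : Type*} [MeasurableSpace X] (μ ν : Measure X) : ℝ :=
  sSup { r : ℝ | ∃ A : Set X, MeasurableSet A ∧ r = |(μ A).toReal - (ν A).toReal| }

lemma planCost_nonneg {X : Type*} [MetricSpace X] [MeasurableSpace X] (p : ℝ)
    (γ : Measure (X × X)) : 0 ≤ planCost p γ :=
  Real.rpow_nonneg (integral_nonneg fun _ => Real.rpow_nonneg dist_nonneg _) _

lemma plan_scale {X : Type*} [MetricSpace X] [MeasurableSpace X] (p : ℝ) (hp : 1 ≤ p)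
    (μ ν : Measure X) (α β : ℝ) (hα : 0 ≤ α) (hαβ : α ≤ β) (γ : Measure (X × X))
    (h : IsPartialPlan μ ν β γ) :
    ∃ γ', IsPartialPlan μ ν α γ' ∧ planCost p γ' ≤ planCost p γ := by
  rcases (hα.trans hαβ).eq_or_lt with hβ | hβ
  · have : α = β := le_antisymm hαβ (hβ ▸ hα)
    subst this
    exact ⟨γ, h, le_rfl⟩
  have hc0 : 0 ≤ α / β := div_nonneg hα hβ.le
  have hc1 : α / β ≤ 1 := (div_le_one hβ).2 hαβ
  have hle : ∀ m : Measure X, ENNReal.ofReal (α / β) • m ≤ m := by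
    intro m
    rw [Measure.le_iff]
    intro s _
    rw [Measure.smul_apply, smul_eq_mul]
    exact mul_le_of_le_one_left' (ENNReal.ofReal_le_one.2 hc1)
  refine ⟨ENNReal.ofReal (α / β) • γ, ⟨?_, ?_, ?_⟩, ?_⟩
  · rw [Measure.smul_apply, smul_eq_mul, h.1, ← ENNReal.ofReal_mul hc0,
      div_mul_cancel₀ _ hβ.ne']
  · rw [Measure.map_smul]
    exact (hle _).trans h.2.1
  · rw [Measure.map_smul]
    exact (hle _).trans h.2.2
  · unfold planCost
    have h0 : 0 ≤ ∫ z : X × X, dist z.1 z.2 ^ p ∂γ :=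
      integral_nonneg fun _ => Real.rpow_nonneg dist_nonneg _
    rw [integral_smul_measure, ENNReal.toReal_ofReal hc0, smul_eq_mul]
    exact Real.rpow_le_rpow (mul_nonneg hc0 h0) (mul_le_of_le_one_left h0 hc1) (by positivity)

lemma partialW_le {X : Type*} [MetricSpace X] [MeasurableSpace X] (p α : ℝ)
    (μ ν : Measure X) (γ : Measure (X × X)) (h : IsPartialPlan μ ν α γ) :
    partialW p α μ ν ≤ planCost p γ := by
  refine csInf_le ⟨0, ?_⟩ ⟨γ, h, rfl⟩
  rintro _ ⟨γ, _, rfl⟩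
  exact planCost_nonneg p γ

lemma partialW_nonneg {X : Type*} [MetricSpace X] [MeasurableSpace X] (p α : ℝ)
    (μ ν : Measure X) : 0 ≤ partialW p α μ ν := by
  refine Real.sInf_nonneg ?_
  rintro _ ⟨γ, _, rfl⟩
  exact planCost_nonneg p γ

lemma plan_prod {X : Type*} [MetricSpace X] [MeasurableSpace X]
    (μ ν : Measure X) [IsProbabilityMeasure μ] [IsProbabilityMeasure ν] :
    IsPartialPlan μ ν 1 (μ.prod ν) := by
  refine ⟨by simp, ?_, ?_⟩
  · rw [Measure.map_fst_prod]; simp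
  · rw [Measure.map_snd_prod]; simp

lemma partialW_mono {X : Type*} [MetricSpace X] [MeasurableSpace X] (p : ℝ) (hp : 1 ≤ p)
    (μ ν : Measure X) [IsProbabilityMeasure μ] [IsProbabilityMeasure ν]
    (α β : ℝ) (hα : 0 ≤ α) (hαβ : α ≤ β) (hβ : β ≤ 1) :
    partialW p α μ ν ≤ partialW p β μ ν := by
  refine le_csInf ?_ ?_
  · obtain ⟨γ, h, _⟩ := plan_scale p hp μ ν β 1 (hα.trans hαβ) hβ _ (plan_prod μ ν)
    exact ⟨_, γ, h, rfl⟩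
  · rintro _ ⟨γ, h, rfl⟩
    obtain ⟨γ', h', hc⟩ := plan_scale p hp μ ν α β hα hαβ γ h
    exact (partialW_le p α μ ν γ' h').trans hc

lemma tv_bdd {X : Type*} [MeasurableSpace X]
    (μ ν : Measure X) [IsProbabilityMeasure μ] [IsProbabilityMeasure ν] (A : Set X) :
    |(μ A).toReal - (ν A).toReal| ≤ 1 := by
  have h1 : (μ A).toReal ≤ 1 := measureReal_le_one
  have h2 : (ν A).toReal ≤ 1 := measureReal_le_one
  have h3 : 0 ≤ (μ A).toReal := ENNReal.toReal_nonneg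
  have h4 : 0 ≤ (ν A).toReal := ENNReal.toReal_nonneg
  rw [abs_le]
  constructor <;> linarith

lemma diag_plan {X : Type*} [MetricSpace X] [CompactSpace X] [MeasurableSpace X] [BorelSpace X]
    (μ ν : Measure X) [IsProbabilityMeasure μ] [IsProbabilityMeasure ν] (p : ℝ) (hp : 1 ≤ p) :
    ∃ γ : Measure (X × X), ∃ m : ℝ, 1 - TVdist μ ν ≤ m ∧ IsPartialPlan μ ν m γ ∧
      planCost p γ = 0 := by
  obtain ⟨s, hs, h1, h2⟩ := hahn_decomposition ν μ
  have hmeas : Measurable (fun x : X => (x, x)) := by fun_prop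
  have hS : μ.restrict s + ν.restrict sᶜ ≤ μ := by
    rw [Measure.le_iff]
    intro t ht
    rw [Measure.add_apply, Measure.restrict_apply ht, Measure.restrict_apply ht,
      ← measure_inter_add_sdiff t hs (μ := μ)]
    exact add_le_add le_rfl (h2 _ (ht.inter hs.compl) Set.inter_subset_right)
  have hT : μ.restrict s + ν.restrict sᶜ ≤ ν := by
    rw [Measure.le_iff]
    intro t ht
    rw [Measure.add_apply, Measure.restrict_apply ht, Measure.restrict_apply ht,
      ← measure_inter_add_sdiff t hs (μ := ν)]
    exact add_le_add (h1 _ (ht.inter hs) Set.inter_subset_right) le_rfl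
  refine ⟨(μ.restrict s + ν.restrict sᶜ).map (fun x => (x, x)),
    (μ s).toReal + (ν sᶜ).toReal, ?_, ⟨?_, ?_, ?_⟩, ?_⟩
  · have hb : |(μ s).toReal - (ν s).toReal| ≤ TVdist μ ν := by
      refine le_csSup ⟨1, ?_⟩ ⟨s, hs, rfl⟩
      rintro _ ⟨A, _, rfl⟩
      exact tv_bdd μ ν A
    have hc : (ν sᶜ).toReal = 1 - (ν s).toReal := probReal_compl_eq_one_sub hs
    have := (abs_le.1 hb).1
    linarith
  · rw [Measure.map_apply hmeas MeasurableSet.univ,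
      ENNReal.ofReal_add ENNReal.toReal_nonneg ENNReal.toReal_nonneg,
      ENNReal.ofReal_toReal (measure_ne_top _ _), ENNReal.ofReal_toReal (measure_ne_top _ _)]
    simp
  · rw [Measure.map_map measurable_fst hmeas]
    have : (Prod.fst ∘ fun x : X => (x, x)) = id := rfl
    rw [this, Measure.map_id]
    exact hS
  · rw [Measure.map_map measurable_snd hmeas]
    have : (Prod.snd ∘ fun x : X => (x, x)) = id := rfl
    rw [this, Measure.map_id]
    exact hT
  · have hp0 : p ≠ 0 := by linarith
    have hm : Measurable (fun z : X × X => dist z.1 z.2 ^ p) :=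
      (measurable_fst.dist measurable_snd).pow_const p
    unfold planCost
    rw [integral_map hmeas.aemeasurable hm.aestronglyMeasurable]
    simp [Real.zero_rpow hp0, hp0]

/-- With `δ = ‖μ − μ̃‖_TV` and assumption (A1):
`W_{p,1−δ/10}(μ, μ̃) ≥ (1/2)·W_p(μ, μ̃)`, one has
`min {δ/10, (1/(2k))·W_p(μ, μ̃)} ≤ RPW_{p,k}(μ, μ̃) ≤ min {δ, (1/k)·W_p(μ, μ̃)}`,
i.e. `RPW_{p,k}(μ, μ̃) = Θ(min {δ, (1/k)·W_p(μ, μ̃)})`. -/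
theorem rpw_theta_of_min
    {X : Type*} [MetricSpace X] [CompactSpace X] [MeasurableSpace X] [BorelSpace X]
    (hdiam : ∀ a b : X, dist a b ≤ 1)
    (μ μt : Measure X) [IsProbabilityMeasure μ] [IsProbabilityMeasure μt]
    (p k : ℝ) (hp : 1 ≤ p) (hk : 0 < k)
    (δ : ℝ) (hδ : δ = TVdist μ μt)
    (hA1 : (1 / 2) * partialW p 1 μ μt ≤ partialW p (1 - δ / 10) μ μt) :
    min (δ / 10) ((1 / (2 * k)) * partialW p 1 μ μt) ≤ RPW p k μ μt ∧
    RPW p k μ μt ≤ min δ ((1 / k) * partialW p 1 μ μt) := by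
  have hδ0 : 0 ≤ δ := by
    rw [hδ]
    refine Real.sSup_nonneg ?_
    rintro _ ⟨A, _, rfl⟩
    exact abs_nonneg _
  have hδ1 : δ ≤ 1 := by
    rw [hδ]
    refine csSup_le ⟨_, ∅, MeasurableSet.empty, rfl⟩ ?_
    rintro _ ⟨A, _, rfl⟩
    exact tv_bdd μ μt A
  obtain ⟨γ, m, hm, hγ, hc⟩ := diag_plan μ μt p hp
  rw [← hδ] at hm
  have hWδ : ∀ ε, δ ≤ ε → ε ≤ 1 → partialW p (1 - ε) μ μt ≤ k * ε := by
    intro ε h1 h2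
    obtain ⟨γ', hγ', hc'⟩ := plan_scale p hp μ μt (1 - ε) m (by linarith) (by linarith) γ hγ
    have := (partialW_le p _ μ μt γ' hγ').trans (hc'.trans hc.le)
    have : 0 ≤ k * ε := mul_nonneg hk.le (hδ0.trans h1)
    linarith
  have hbdd : BddBelow { ε : ℝ | ε ∈ Set.Icc (0:ℝ) 1 ∧ partialW p (1 - ε) μ μt ≤ k * ε } :=
    ⟨0, fun ε h => h.1.1⟩
  refine ⟨?_, le_min ?_ ?_⟩
  · refine le_csInf ⟨1, ⟨zero_le_one, le_rfl⟩, hWδ 1 hδ1 le_rfl⟩ ?_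
    rintro ε ⟨⟨h0, h1⟩, hε⟩
    rcases le_or_gt (δ / 10) ε with h | h
    · exact (min_le_left _ _).trans h
    · refine (min_le_right _ _).trans ?_
      have := partialW_mono p hp μ μt (1 - δ / 10) (1 - ε) (by linarith) (by linarith)
        (by linarith)
      rw [one_div, inv_mul_le_iff₀ (by positivity)]
      linarith
  · exact csInf_le hbdd ⟨⟨hδ0, hδ1⟩, hWδ δ le_rfl hδ1⟩
  · have hW0 := partialW_nonneg p 1 μ μt
    have hε0 : 0 ≤ (1 / k) * partialW p 1 μ μt := by positivity
    rcases le_or_gt ((1 / k) * partialW p 1 μ μt) 1 with h | h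
    · refine csInf_le hbdd ⟨⟨hε0, h⟩, ?_⟩
      have := partialW_mono p hp μ μt (1 - (1 / k) * partialW p 1 μ μt) 1 (by linarith)
        (by linarith) le_rfl
      refine this.trans (le_of_eq ?_)
      field_simp
    · refine le_trans ?_ h.le
      exact csInf_le hbdd ⟨⟨zero_le_one, le_rfl⟩, hWδ 1 hδ1 le_rfl⟩
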